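/- For every f ∈ L¹(γ_d) and almost every x ∈ ℝ^d, T_t f(y) → f(x) as (y,t) → (x,0) with (y,t) in the parabolic Gaussian cone Γ^p_γ(x) = {(y,t) ∈ ℝ^{d+1}_+ : |y−x| < t^{1/2} ∧ (1/|x|) ∧ 1}. -/

import Mathlib

open Real MeasureTheory Filter Topology

/-- The Gaussian measure `γ_d` on `ℝ^d`, with density `π^{-d/2} e^{-|x|²}`. -/
noncomputable def gaussianMeasure (d : ℕ) : Measure (EuclideanSpace ℝ (Fin d)) :=
  volume.withDensity fun x => ENNReal.ofReal (π ^ (-(d:ℝ)/2) * Real.exp (-‖x‖ ^ 2))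

/-- The Ornstein-Uhlenbeck (Mehler) semigroup. -/
noncomputable def ouSemigroup {d : ℕ} (t : ℝ) (f : EuclideanSpace ℝ (Fin d) → ℝ)
    (x : EuclideanSpace ℝ (Fin d)) : ℝ :=
  π ^ (-(d:ℝ)/2) * (1 - Real.exp (-2*t)) ^ (-(d:ℝ)/2) *
    ∫ y, Real.exp (-‖y - Real.exp (-t) • x‖ ^ 2 / (1 - Real.exp (-2*t))) * f y

/-- The parabolic gaussian cone `Γ^p_γ(x)`. -/
def parabolicCone {d : ℕ} (x : EuclideanSpace ℝ (Fin d)) :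
    Set ((EuclideanSpace ℝ (Fin d)) × ℝ) :=
  {p | 0 < p.2 ∧ ‖p.1 - x‖ < min (min (Real.sqrt p.2) (1 / ‖x‖)) 1}

section

variable {V : Type*} [NormedAddCommGroup V]

/-- A superlevel set of a Gaussian centred at `x` is empty or an open ball centred at `x`. -/
lemma setOf_lt_exp_neg_mul_norm_sub_sq {b : ℝ} (hb : 0 < b) (x : V) {t : ℝ} (ht : 0 < t) :
    {z : V | t < rexp (-b * ‖z - x‖ ^ 2)} = ∅ ∨
      ∃ r > 0, {z : V | t < rexp (-b * ‖z - x‖ ^ 2)} = Metric.ball x r := by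
  rcases le_or_gt 1 t with h1 | h1
  · left
    ext z
    simp only [Set.mem_ofPred_eq, Set.mem_empty_iff_false, iff_false, not_lt]
    refine le_trans (Real.exp_le_one_iff.2 ?_) h1
    nlinarith [sq_nonneg ‖z - x‖]
  · right
    have hl : 0 < -Real.log t / b := div_pos (neg_pos.2 (Real.log_neg ht h1)) hb
    refine ⟨√(-Real.log t / b), Real.sqrt_pos.2 hl, ?_⟩
    ext z
    rw [Set.mem_ofPred_eq, Metric.mem_ball, dist_eq_norm, Real.lt_sqrt (norm_nonneg _),
      lt_div_iff₀ hb, ← Real.log_lt_iff_lt_exp ht]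
    constructor <;> intro h <;> linarith

/-- Comparison of a Gaussian of variance `s` centred at distance `O(√s)` from `x` with
a wider Gaussian centred at `x`. -/
lemma exp_neg_norm_sub_sq_div_le {s A : ℝ} (hs : 0 < s) {w x : V} (hw : ‖w - x‖ ^ 2 ≤ A * s)
    (z : V) :
    rexp (-‖z - w‖ ^ 2 / s) ≤ rexp A * rexp (-(1 / (2 * s)) * ‖z - x‖ ^ 2) := by
  rw [← Real.exp_add, Real.exp_le_exp]
  have h1 : ‖z - x‖ ≤ ‖z - w‖ + ‖w - x‖ := by simpa using norm_add_le (z - w) (w - x)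
  have h2 : ‖z - x‖ ^ 2 ≤ 2 * ‖z - w‖ ^ 2 + 2 * (A * s) := by
    nlinarith [norm_nonneg (z - x), sq_nonneg (‖z - w‖ - ‖w - x‖), norm_nonneg (z - w),
      norm_nonneg (w - x)]
  rw [div_le_iff₀ hs]
  have : (A + -(1 / (2 * s)) * ‖z - x‖ ^ 2) * s = A * s - ‖z - x‖ ^ 2 / 2 := by
    field_simp
    ring
  rw [this]
  linarith

lemma exp_neg_norm_sub_sq_le_of_le {s δ : ℝ} (hs : 0 < s) (hs8 : s ≤ 1 / 8) (hδ : 0 ≤ δ)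
    {x z : V} (hz : δ ≤ ‖z - x‖) :
    rexp (-(1 / (2 * s)) * ‖z - x‖ ^ 2) ≤
      rexp (2 * ‖x‖ ^ 2) * rexp (-(δ ^ 2 / 4) * s⁻¹) * rexp (-‖z‖ ^ 2) := by
  rw [← Real.exp_add, ← Real.exp_add, Real.exp_le_exp]
  have h1 : ‖z‖ ≤ ‖z - x‖ + ‖x‖ := by simpa using norm_add_le (z - x) x
  have h2 : ‖z‖ ^ 2 ≤ 2 * ‖z - x‖ ^ 2 + 2 * ‖x‖ ^ 2 := by
    nlinarith [norm_nonneg z, sq_nonneg (‖z - x‖ - ‖x‖), norm_nonneg (z - x), norm_nonneg x]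
  have h3 : δ ^ 2 ≤ ‖z - x‖ ^ 2 := by gcongr
  have h4 : (8 : ℝ) ≤ s⁻¹ := by
    rw [le_inv_comm₀ (by norm_num) hs]; linarith
  have h5 : -(1 / (2 * s)) * ‖z - x‖ ^ 2 = -(‖z - x‖ ^ 2 / 4) * s⁻¹ - ‖z - x‖ ^ 2 / 4 * s⁻¹ := by
    field_simp; ring
  have h6 : ‖z - x‖ ^ 2 / 4 * 8 ≤ ‖z - x‖ ^ 2 / 4 * s⁻¹ := by gcongr
  have h7 : δ ^ 2 / 4 * s⁻¹ ≤ ‖z - x‖ ^ 2 / 4 * s⁻¹ := by gcongr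
  rw [h5]
  linarith

end

section

variable {V : Type*} [NormedAddCommGroup V] [InnerProductSpace ℝ V] [FiniteDimensional ℝ V]
  [MeasurableSpace V] [BorelSpace V]

lemma integral_exp_neg_mul_norm_sub_sq {b : ℝ} (hb : 0 < b) (w : V) :
    ∫ z : V, rexp (-b * ‖z - w‖ ^ 2) = (π / b) ^ (Module.finrank ℝ V / 2 : ℝ) := by
  rw [integral_sub_right_eq_self (fun z : V => rexp (-b * ‖z‖ ^ 2)) w]
  exact GaussianFourier.integral_rexp_neg_mul_sq_norm hb

lemma integrable_exp_neg_mul_norm_sub_sq {b : ℝ} (hb : 0 < b) (w : V) :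
    Integrable fun z : V => rexp (-b * ‖z - w‖ ^ 2) := by
  by_contra h
  have h1 := integral_exp_neg_mul_norm_sub_sq hb w
  rw [integral_undef h] at h1
  have : 0 < (π / b) ^ (Module.finrank ℝ V / 2 : ℝ) := by positivity
  linarith

/-- If the mean of `g ≥ 0` over every ball centred at `x` is at most `ε`, then so is its mean
against every Gaussian centred at `x`. -/
lemma lintegral_exp_neg_mul_norm_sub_sq_mul_le {b : ℝ} (hb : 0 < b) (x : V) {g : V → ENNReal}
    (hg : AEMeasurable g) {ε : ENNReal} (hε : ε ≠ ⊤)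
    (h : ∀ r > 0, ∫⁻ z in Metric.closedBall x r, g z ≤ ε * volume (Metric.closedBall x r)) :
    ∫⁻ z, g z * ENNReal.ofReal (rexp (-b * ‖z - x‖ ^ 2)) ≤
      ε * ∫⁻ z, ENNReal.ofReal (rexp (-b * ‖z - x‖ ^ 2)) := by
  have hc : Continuous fun z : V => rexp (-b * ‖z - x‖ ^ 2) := by fun_prop
  have hpos (μ : Measure V) : 0 ≤ᵐ[μ] fun z : V => rexp (-b * ‖z - x‖ ^ 2) :=
    ae_of_all _ fun z => (Real.exp_pos _).le
  have hw := lintegral_withDensity_eq_lintegral_mul₀ hg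
    (g := fun z => ENNReal.ofReal (rexp (-b * ‖z - x‖ ^ 2))) (by fun_prop)
  simp only [Pi.mul_apply] at hw
  rw [← hw, lintegral_eq_lintegral_meas_lt _ (hpos _) hc.aemeasurable,
    lintegral_eq_lintegral_meas_lt _ (hpos _) hc.aemeasurable, ← lintegral_const_mul' _ _ hε]
  refine setLIntegral_mono' measurableSet_Ioi fun t ht => ?_
  rcases setOf_lt_exp_neg_mul_norm_sub_sq hb x ht with he | ⟨r, hr, he⟩
  · rw [he, measure_empty]
    exact zero_le
  · rw [he, Measure.addHaar_ball_of_pos volume x hr, ← Measure.addHaar_closedBall volume x hr.le,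
      withDensity_apply _ Metric.isOpen_ball.measurableSet]
    exact (lintegral_mono_set Metric.ball_subset_closedBall).trans (h r hr)

lemma integral_exp_neg_mul_norm_sub_sq_mul_le {b : ℝ} (hb : 0 < b) (x : V) {g : V → ℝ}
    (hg : Integrable g) (hg0 : 0 ≤ g) {ε : ℝ} (hε : 0 ≤ ε)
    (h : ∀ r > 0, ∫ z in Metric.closedBall x r, g z ≤ ε * volume.real (Metric.closedBall x r)) :
    ∫ z, g z * rexp (-b * ‖z - x‖ ^ 2) ≤ ε * (π / b) ^ (Module.finrank ℝ V / 2 : ℝ) := by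
  have key := lintegral_exp_neg_mul_norm_sub_sq_mul_le hb x (ε := ENNReal.ofReal ε)
    hg.aemeasurable.ennreal_ofReal ENNReal.ofReal_ne_top (fun r hr => by
      rw [← ofReal_integral_eq_lintegral_ofReal hg.integrableOn (ae_of_all _ hg0),
        ← ENNReal.ofReal_toReal (measure_closedBall_lt_top (μ := volume) (x := x) (r := r)).ne,
        ← ENNReal.ofReal_mul hε]
      exact ENNReal.ofReal_le_ofReal (h r hr))
  rw [← ofReal_integral_eq_lintegral_ofReal (integrable_exp_neg_mul_norm_sub_sq hb x)
      (ae_of_all _ fun z => (Real.exp_pos _).le), integral_exp_neg_mul_norm_sub_sq hb,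
    ← ENNReal.ofReal_mul hε] at key
  rw [integral_eq_lintegral_of_nonneg_ae
    (ae_of_all _ fun z => mul_nonneg (hg0 z) (Real.exp_pos _).le) (by
      exact hg.aestronglyMeasurable.mul (by fun_prop))]
  refine ENNReal.toReal_le_of_le_ofReal (by positivity) (le_trans (le_of_eq ?_) key)
  exact lintegral_congr fun z => ENNReal.ofReal_mul (hg0 z)

/-- Near/far splitting of the integral of `g` against a Gaussian of variance `s` whose centre is
at distance `O(√s)` from `x`. -/
lemma integral_exp_neg_norm_sub_sq_div_mul_le {s A δ ε : ℝ} (hs : 0 < s) (hs8 : s ≤ 1 / 8)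
    (hδ : 0 < δ) (hε : 0 ≤ ε) {w x : V} (hw : ‖w - x‖ ^ 2 ≤ A * s) {g : V → ℝ} (hg0 : 0 ≤ g)
    (hg : Integrable fun z => rexp (-‖z‖ ^ 2) * g z) (hgl : LocallyIntegrable g)
    (h : ∀ r > 0, r ≤ δ →
      ∫ z in Metric.closedBall x r, g z ≤ ε * volume.real (Metric.closedBall x r)) :
    ∫ z, rexp (-‖z - w‖ ^ 2 / s) * g z ≤
      rexp A * (ε * (π * (2 * s)) ^ (Module.finrank ℝ V / 2 : ℝ)) +
      rexp A * rexp (2 * ‖x‖ ^ 2) * rexp (-(δ ^ 2 / 4) * s⁻¹) * ∫ z, rexp (-‖z‖ ^ 2) * g z := by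
  have hb : 0 < 1 / (2 * s) := by positivity
  set B := Metric.closedBall x δ with hB
  have hBm : MeasurableSet B := Metric.isClosed_closedBall.measurableSet
  have hBi : IntegrableOn g B := hgl.integrableOn_isCompact (isCompact_closedBall x δ)
  have hgB : Integrable (B.indicator g) := (integrable_indicator_iff hBm).2 hBi
  have hgB0 : 0 ≤ B.indicator g := fun z => Set.indicator_nonneg (fun z _ => hg0 z) z
  have near := integral_exp_neg_mul_norm_sub_sq_mul_le hb x hgB hgB0 hε (fun r hr => by
    rw [setIntegral_indicator hBm]
    rcases le_total r δ with hrδ | hrδ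
    · rw [Set.inter_eq_left.2 (Metric.closedBall_subset_closedBall hrδ)]
      exact h r hr hrδ
    · rw [Set.inter_eq_right.2 (Metric.closedBall_subset_closedBall hrδ)]
      refine (h δ hδ le_rfl).trans ?_
      gcongr
      exact measure_closedBall_lt_top.ne)
  have hnear : Integrable fun z => B.indicator g z * rexp (-(1 / (2 * s)) * ‖z - x‖ ^ 2) := by
    refine hgB.mul_bdd (c := 1) (by fun_prop) (ae_of_all _ fun z => ?_)
    rw [Real.norm_of_nonneg (Real.exp_pos _).le]
    refine Real.exp_le_one_iff.2 ?_
    nlinarith [sq_nonneg ‖z - x‖]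
  rw [show π / (1 / (2 * s)) = π * (2 * s) by field_simp] at near
  calc ∫ z, rexp (-‖z - w‖ ^ 2 / s) * g z
      ≤ ∫ z, (rexp A * (B.indicator g z * rexp (-(1 / (2 * s)) * ‖z - x‖ ^ 2)) +
          rexp A * rexp (2 * ‖x‖ ^ 2) * rexp (-(δ ^ 2 / 4) * s⁻¹) * (rexp (-‖z‖ ^ 2) * g z)) := by
        refine integral_mono_of_nonneg
          (ae_of_all _ fun z => mul_nonneg (Real.exp_pos _).le (hg0 z))
          ((hnear.const_mul _).add (hg.const_mul _)) (ae_of_all _ fun z => ?_)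
        have hgz : 0 ≤ g z := hg0 z
        have h1 := mul_le_mul_of_nonneg_right (exp_neg_norm_sub_sq_div_le hs hw z) hgz
        refine h1.trans ?_
        dsimp only
        by_cases hz : z ∈ B
        · rw [Set.indicator_of_mem hz]
          have : 0 ≤ rexp A * rexp (2 * ‖x‖ ^ 2) * rexp (-(δ ^ 2 / 4) * s⁻¹) *
            (rexp (-‖z‖ ^ 2) * g z) := by positivity
          linarith
        · rw [Set.indicator_of_notMem hz]
          have hz' : δ ≤ ‖z - x‖ := by
            rw [hB, Metric.mem_closedBall, dist_eq_norm, not_le] at hz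
            exact hz.le
          have h2 := exp_neg_norm_sub_sq_le_of_le hs hs8 hδ.le hz'
          calc _ ≤ rexp A * (rexp (2 * ‖x‖ ^ 2) * rexp (-(δ ^ 2 / 4) * s⁻¹) *
                rexp (-‖z‖ ^ 2)) * g z := by gcongr
            _ = _ := by ring
    _ = rexp A * (∫ z, B.indicator g z * rexp (-(1 / (2 * s)) * ‖z - x‖ ^ 2)) +
          rexp A * rexp (2 * ‖x‖ ^ 2) * rexp (-(δ ^ 2 / 4) * s⁻¹) *
            ∫ z, rexp (-‖z‖ ^ 2) * g z := by
        rw [integral_add (hnear.const_mul _) (hg.const_mul _), integral_const_mul,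
          integral_const_mul]
    _ ≤ _ := by gcongr

/-- At a Lebesgue point the mean oscillation over small balls is at most `ε`. -/
lemma ae_exists_setIntegral_norm_sub_le {f : V → ℝ}
    (hf : LocallyIntegrable f) :
    ∀ᵐ x : V, ∀ ε > 0, ∃ δ > 0, ∀ r > 0, r ≤ δ →
      ∫ z in Metric.closedBall x r, ‖f z - f x‖ ≤ ε * volume.real (Metric.closedBall x r) := by
  filter_upwards [IsUnifLocDoublingMeasure.ae_tendsto_average_norm_sub volume hf 1] with x hx ε hε
  have h1 := hx (fun _ : ℝ => x) id (l := 𝓝[>] 0) tendsto_id (by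
    filter_upwards [self_mem_nhdsWithin] with r hr
    exact Metric.mem_closedBall_self (by simpa using le_of_lt hr))
  have h2 := h1.eventually_lt_const hε
  obtain ⟨δ, hδ, hsub⟩ := mem_nhdsGT_iff_exists_Ioc_subset.1 h2
  refine ⟨δ, hδ, fun r hr hrδ => ?_⟩
  have h3 : ⨍ z in Metric.closedBall x r, ‖f z - f x‖ < ε := hsub ⟨hr, hrδ⟩
  have hv : 0 < volume.real (Metric.closedBall x r) :=
    ENNReal.toReal_pos (Metric.measure_closedBall_pos _ x hr).ne' measure_closedBall_lt_top.ne
  rw [setAverage_eq, smul_eq_mul, inv_mul_lt_iff₀ hv] at h3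
  linarith

end

lemma integrable_gaussianMeasure_iff {d : ℕ} {f : EuclideanSpace ℝ (Fin d) → ℝ} :
    Integrable f (gaussianMeasure d) ↔ Integrable fun z => rexp (-‖z‖ ^ 2) * f z := by
  rw [gaussianMeasure, integrable_withDensity_iff_integrable_smul' (by fun_prop)
    (ae_of_all _ fun z => ENNReal.ofReal_lt_top)]
  have hπ : π ^ (-(d : ℝ) / 2) ≠ 0 := (Real.rpow_pos_of_pos Real.pi_pos _).ne'
  rw [← integrable_const_mul_iff (IsUnit.mk0 _ hπ) (fun z => rexp (-‖z‖ ^ 2) * f z)]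
  refine integrable_congr (ae_of_all _ fun z => ?_)
  dsimp only
  rw [ENNReal.toReal_ofReal (by positivity), smul_eq_mul, mul_assoc]

lemma locallyIntegrable_of_integrable_exp_neg_norm_sq_mul {V : Type*} [NormedAddCommGroup V]
    [LocallyCompactSpace V] [MeasurableSpace V] [BorelSpace V] {μ : Measure V} {f : V → ℝ}
    (hf : Integrable (fun z => rexp (-‖z‖ ^ 2) * f z) μ) : LocallyIntegrable f μ := by
  have := hf.locallyIntegrable.continuous_mul (g := fun z => rexp (‖z‖ ^ 2)) (by fun_prop)
  simpa [← mul_assoc, ← Real.exp_add] using this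

/-- Quantitative comparison of `T_t f(y)` with `f(x)` in terms of the mean oscillation of `f`
at `x`, for `y` such that `e^{-t} y` is at distance `O(√(1 - e^{-2t}))` from `x`. -/
lemma abs_ouSemigroup_sub_le {d : ℕ} {f : EuclideanSpace ℝ (Fin d) → ℝ}
    (hf : Integrable f (gaussianMeasure d)) {x y : EuclideanSpace ℝ (Fin d)} {t s A δ ε : ℝ}
    (hst : 1 - rexp (-2 * t) = s) (hs : 0 < s) (hs8 : s ≤ 1 / 8) (hδ : 0 < δ) (hε : 0 ≤ ε)
    (hw : ‖rexp (-t) • y - x‖ ^ 2 ≤ A * s)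
    (h : ∀ r > 0, r ≤ δ → ∫ z in Metric.closedBall x r, ‖f z - f x‖ ≤
      ε * volume.real (Metric.closedBall x r)) :
    |ouSemigroup t f y - f x| ≤ rexp A * 2 ^ ((d : ℝ) / 2) * ε +
      (π ^ (-(d : ℝ) / 2) * rexp A * rexp (2 * ‖x‖ ^ 2) *
        ∫ z, rexp (-‖z‖ ^ 2) * ‖f z - f x‖) * (s ^ (-(d : ℝ) / 2) * rexp (-(δ ^ 2 / 4) * s⁻¹)) := by
  set w := rexp (-t) • y with hwdef
  set c := π ^ (-(d : ℝ) / 2) * s ^ (-(d : ℝ) / 2) with hc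
  have hc0 : 0 < c := by positivity
  have hcπ : ∀ a > 0, c * (π * (a * s)) ^ ((d : ℝ) / 2) = a ^ ((d : ℝ) / 2) := by
    intro a ha
    rw [Real.mul_rpow pi_pos.le (by positivity), Real.mul_rpow ha.le hs.le, hc, neg_div,
      Real.rpow_neg pi_pos.le, Real.rpow_neg hs.le]
    field_simp
  have hG : (fun z => rexp (-‖z - w‖ ^ 2 / s)) = fun z => rexp (-(1 / s) * ‖z - w‖ ^ 2) := by
    ext z
    congr 1
    ring
  have hGi : Integrable fun z => rexp (-‖z - w‖ ^ 2 / s) := by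
    rw [hG]
    exact integrable_exp_neg_mul_norm_sub_sq (by positivity) w
  have hG1 : c * ∫ z, rexp (-‖z - w‖ ^ 2 / s) = 1 := by
    rw [hG, integral_exp_neg_mul_norm_sub_sq (by positivity), finrank_euclideanSpace_fin]
    simpa using hcπ 1 one_pos
  have hfE := integrable_gaussianMeasure_iff.1 hf
  have hfl := locallyIntegrable_of_integrable_exp_neg_norm_sq_mul hfE
  have hE : Integrable fun z : EuclideanSpace ℝ (Fin d) => rexp (-‖z‖ ^ 2) := by
    simpa using integrable_exp_neg_mul_norm_sub_sq one_pos (0 : EuclideanSpace ℝ (Fin d))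
  have hGf : Integrable fun z => rexp (-‖z - w‖ ^ 2 / s) * f z := by
    refine (hfE.norm.const_mul (rexp A * rexp (2 * ‖x‖ ^ 2))).mono'
      (hGi.aestronglyMeasurable.mul hfl.aestronglyMeasurable) (ae_of_all _ fun z => ?_)
    have h1 := exp_neg_norm_sub_sq_div_le hs hw z
    have h2 := exp_neg_norm_sub_sq_le_of_le hs hs8 le_rfl (norm_nonneg (z - x))
    rw [norm_mul, norm_mul, Real.norm_of_nonneg (Real.exp_pos _).le,
      Real.norm_of_nonneg (Real.exp_pos _).le, ← mul_assoc]
    gcongr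
    refine h1.trans ?_
    rw [mul_assoc]
    gcongr
    simpa using h2
  have hgE : Integrable fun z => rexp (-‖z‖ ^ 2) * ‖f z - f x‖ := by
    refine ((hfE.sub (hE.mul_const (f x))).norm).congr (ae_of_all _ fun z => ?_)
    simp [← mul_sub]
  have hgl := locallyIntegrable_of_integrable_exp_neg_norm_sq_mul hgE
  have hsub : ouSemigroup t f y - f x = c * ∫ z, rexp (-‖z - w‖ ^ 2 / s) * (f z - f x) := by
    simp only [mul_sub]
    rw [integral_sub hGf (hGi.mul_const _), integral_mul_const, mul_sub, ← mul_assoc c _ (f x),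
      hG1, one_mul, ouSemigroup, hst]
  have hnorm : |∫ z, rexp (-‖z - w‖ ^ 2 / s) * (f z - f x)| ≤
      ∫ z, rexp (-‖z - w‖ ^ 2 / s) * ‖f z - f x‖ := by
    rw [← Real.norm_eq_abs]
    refine (norm_integral_le_integral_norm _).trans_eq (integral_congr_ae (ae_of_all _ fun z => ?_))
    dsimp only
    rw [norm_mul, Real.norm_of_nonneg (Real.exp_pos _).le]
  have hmain := integral_exp_neg_norm_sub_sq_div_mul_le hs hs8 hδ hε hw
    (fun z => norm_nonneg (f z - f x)) hgE hgl h
  rw [finrank_euclideanSpace_fin] at hmain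
  rw [hsub, abs_mul, abs_of_pos hc0]
  calc _ ≤ c * _ := mul_le_mul_of_nonneg_left (hnorm.trans hmain) hc0.le
    _ = rexp A * (c * (π * (2 * s)) ^ ((d : ℝ) / 2)) * ε + c * (rexp A * rexp (2 * ‖x‖ ^ 2) *
          rexp (-(δ ^ 2 / 4) * s⁻¹) * ∫ z, rexp (-‖z‖ ^ 2) * ‖f z - f x‖) := by ring
    _ = _ := by
      rw [hcπ 2 two_pos, hc]
      ring

lemma le_one_sub_exp_neg_two_mul {t : ℝ} (ht0 : 0 ≤ t) (ht : t ≤ 1 / 2) :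
    t ≤ 1 - rexp (-2 * t) := by
  have h1 : 2 * t + 1 ≤ rexp (2 * t) := Real.add_one_le_exp _
  have h2 : rexp (-2 * t) * rexp (2 * t) = 1 := by
    rw [← Real.exp_add]
    simp
  nlinarith [Real.exp_pos (-2 * t)]

lemma norm_exp_neg_smul_sub_sq_le {V : Type*} [NormedAddCommGroup V] [NormedSpace ℝ V] {x y : V}
    {t : ℝ} (ht0 : 0 ≤ t) (ht : t ≤ 1 / 2) (hy : ‖y - x‖ ≤ √t) :
    ‖rexp (-t) • y - x‖ ^ 2 ≤ (1 + ‖x‖) ^ 2 * (1 - rexp (-2 * t)) := by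
  have h1 : rexp (-t) ≤ 1 := Real.exp_le_one_iff.2 (by linarith)
  have h2 : 1 - rexp (-t) ≤ t := by linarith [Real.add_one_le_exp (-t)]
  have h3 : t ≤ √t := Real.le_sqrt_of_sq_le (by nlinarith)
  have h4 : ‖rexp (-t) • y - x‖ ≤ (1 + ‖x‖) * √t := calc
    ‖rexp (-t) • y - x‖ = ‖rexp (-t) • (y - x) - (1 - rexp (-t)) • x‖ := by
        congr 1
        module
    _ ≤ ‖rexp (-t) • (y - x)‖ + ‖(1 - rexp (-t)) • x‖ := norm_sub_le _ _
    _ = rexp (-t) * ‖y - x‖ + (1 - rexp (-t)) * ‖x‖ := by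
        rw [norm_smul, norm_smul, Real.norm_of_nonneg (Real.exp_pos _).le,
          Real.norm_of_nonneg (sub_nonneg.2 h1)]
    _ ≤ 1 * √t + √t * ‖x‖ := by
        gcongr
        exact h2.trans h3
    _ = (1 + ‖x‖) * √t := by ring
  calc _ ≤ ((1 + ‖x‖) * √t) ^ 2 := by gcongr
    _ = (1 + ‖x‖) ^ 2 * t := by rw [mul_pow, Real.sq_sqrt ht0]
    _ ≤ _ := by
      gcongr
      exact le_one_sub_exp_neg_two_mul ht0 ht

lemma tendsto_rpow_mul_exp_neg_mul_inv_nhdsGT_zero (a : ℝ) {b : ℝ} (hb : 0 < b) :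
    Tendsto (fun s : ℝ => s ^ a * rexp (-b * s⁻¹)) (𝓝[>] 0) (𝓝 0) := by
  refine ((tendsto_rpow_mul_exp_neg_mul_atTop_nhds_zero (-a) b hb).comp
    tendsto_inv_nhdsGT_zero).congr' ?_
  filter_upwards [self_mem_nhdsWithin] with s hs
  have hs : 0 < s := hs
  rw [Function.comp_apply, Real.inv_rpow hs.le, Real.rpow_neg hs.le, inv_inv]

lemma tendsto_one_sub_exp_neg_two_mul_nhdsGT_zero :
    Tendsto (fun t : ℝ => 1 - rexp (-2 * t)) (𝓝[>] 0) (𝓝[>] 0) := by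
  refine tendsto_nhdsWithin_iff.2 ⟨?_, ?_⟩
  · have : Continuous fun t : ℝ => 1 - rexp (-2 * t) := by fun_prop
    simpa using (this.tendsto 0).mono_left nhdsWithin_le_nhds
  · filter_upwards [self_mem_nhdsWithin] with t ht
    have ht : 0 < t := ht
    exact sub_pos.2 (Real.exp_lt_one_iff.2 (by linarith))

/-- Non-tangential a.e. convergence of the Ornstein-Uhlenbeck semigroup:
for every `f ∈ L¹(γ_d)` and a.e. `x`, `T_t f(y) → f(x)` as `(y,t) → (x,0)` within
the parabolic gaussian cone `Γ^p_γ(x)`. -/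
theorem ou_nontangential_convergence {d : ℕ} (f : EuclideanSpace ℝ (Fin d) → ℝ)
    (hf : Integrable f (gaussianMeasure d)) :
    ∀ᵐ x ∂(gaussianMeasure d),
      Tendsto (fun p : (EuclideanSpace ℝ (Fin d)) × ℝ => ouSemigroup p.2 f p.1)
        (𝓝 (x, (0:ℝ)) ⊓ Filter.principal (parabolicCone x)) (𝓝 (f x)) := by
  have hfl := locallyIntegrable_of_integrable_exp_neg_norm_sq_mul
    (integrable_gaussianMeasure_iff.1 hf)
  refine (withDensity_absolutelyContinuous _ _).ae_le ?_
  filter_upwards [ae_exists_setIntegral_norm_sub_le hfl] with x hx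
  have hsnd : Tendsto Prod.snd
      (𝓝 (x, (0 : ℝ)) ⊓ Filter.principal (parabolicCone x)) (𝓝[>] 0) := by
    refine tendsto_inf.2 ⟨(continuous_snd.tendsto (x, (0 : ℝ))).mono_left inf_le_left, ?_⟩
    exact tendsto_principal.2 (eventually_inf_principal.2 (Eventually.of_forall fun p hp => hp.1))
  have hs := tendsto_one_sub_exp_neg_two_mul_nhdsGT_zero.comp hsnd
  refine Metric.tendsto_nhds.2 fun η hη => ?_
  set A := (1 + ‖x‖) ^ 2 with hA
  set K := rexp A * 2 ^ ((d : ℝ) / 2) with hK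
  have hK0 : 0 < K := by positivity
  obtain ⟨δ, hδ, hosc⟩ := hx (η / 2 / K) (by positivity)
  have hfar := ((tendsto_rpow_mul_exp_neg_mul_inv_nhdsGT_zero (-(d : ℝ) / 2)
    (b := δ ^ 2 / 4) (by positivity)).comp hs).const_mul (π ^ (-(d : ℝ) / 2) * rexp A *
      rexp (2 * ‖x‖ ^ 2) * ∫ z, rexp (-‖z‖ ^ 2) * ‖f z - f x‖)
  rw [mul_zero] at hfar
  filter_upwards [hfar.eventually_lt_const (half_pos hη),
    hs.eventually (Ioc_mem_nhdsGT (show (0 : ℝ) < 1 / 8 by norm_num)),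
    hsnd.eventually (Ioc_mem_nhdsGT (show (0 : ℝ) < 1 / 2 by norm_num)),
    mem_inf_of_right (mem_principal_self (parabolicCone x))] with p hp hps hpt hpc
  have hy : ‖p.1 - x‖ ≤ √p.2 :=
    (hpc.2.trans_le ((min_le_left _ _).trans (min_le_left _ _))).le
  have hbound := abs_ouSemigroup_sub_le hf rfl hps.1 hps.2 hδ (by positivity)
    (norm_exp_neg_smul_sub_sq_le hpt.1.le hpt.2 hy) hosc
  rw [Real.dist_eq]
  refine hbound.trans_lt ?_
  have hKη : K * (η / 2 / K) = η / 2 := by field_simp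
  rw [← hA, ← hK, hKη]
  exact (add_lt_add_right hp _).trans_eq (add_halves η)
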